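/- For every integer m ≥ 1, the identity R_m(x,y)·R_{m−1}(x,y) = (y+2)·(X_m² + x²·X_m + y + 2x² − 2) holds in ℂ[x,y]. -/

import Mathlib

open Polynomial

/-- The Chebyshev-like polynomials `S n ∈ R[X]` defined by `S 0 = 1`, `S 1 = X` and
`S (n+1) = X * S n - S (n-1)` for all `n : ℤ`. -/
noncomputable def S (R : Type*) [CommRing R] : ℤ → R[X]
  | 0 => 1
  | 1 => X
  | (n : ℕ) + 2 => X * S R (n + 1) - S R n
  | -((n : ℕ) + 1) => X * S R (-n) - S R (-n + 1)
  termination_by n => Int.natAbs n + Int.natAbs (n - 1)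

/-- The variable `x` of `ℂ[x,y]`, realized as `MvPolynomial (Fin 2) ℂ`. -/
noncomputable def xP : MvPolynomial (Fin 2) ℂ := MvPolynomial.X 0

/-- The variable `y` of `ℂ[x,y]`. -/
noncomputable def yP : MvPolynomial (Fin 2) ℂ := MvPolynomial.X 1

/-- The polynomials `X_m ∈ ℂ[x,y]` defined by `X_0 = -2`, `X_1 = -x^2 - y` and
`X_{m+1} = y * X_m - X_{m-1} - 2x^2` for all `m : ℤ`. -/
noncomputable def Xp : ℤ → MvPolynomial (Fin 2) ℂ
  | 0 => -2
  | 1 => -(MvPolynomial.X 0) ^ 2 - MvPolynomial.X 1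
  | (m : ℕ) + 2 => MvPolynomial.X 1 * Xp (m + 1) - Xp m - 2 * (MvPolynomial.X 0) ^ 2
  | -((m : ℕ) + 1) => MvPolynomial.X 1 * Xp (-m) - Xp (-m + 1) - 2 * (MvPolynomial.X 0) ^ 2
  termination_by m => Int.natAbs m + Int.natAbs (m - 1)

/-- The polynomial `R_m(x,y) = (y+2) * (S_m(y) - S_{m-1}(y) + x^2 * ∑_{i=0}^{m-1} S_i(y))`. -/
noncomputable def Rp (m : ℕ) : MvPolynomial (Fin 2) ℂ :=
  (yP + 2) * (aeval yP (S ℂ (m : ℤ)) - aeval yP (S ℂ ((m : ℤ) - 1))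
    + xP ^ 2 * ∑ i ∈ Finset.range m, aeval yP (S ℂ (i : ℤ)))

theorem S_zero (R : Type*) [CommRing R] : S R 0 = 1 := by
  rw [S]

theorem S_one (R : Type*) [CommRing R] : S R 1 = X := by
  rw [S]

theorem S_add_two (R : Type*) [CommRing R] (n : ℕ) :
    S R ((n : ℤ) + 2) = X * S R ((n : ℤ) + 1) - S R n := by
  conv_lhs => unfold S
  rfl

theorem S_neg_one (R : Type*) [CommRing R] : S R (-1) = 0 := by
  have h : S R (-(((0 : ℕ) : ℤ) + 1)) = X * S R (-((0 : ℕ) : ℤ)) - S R (-((0 : ℕ) : ℤ) + 1) := by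
    conv_lhs => unfold S
    rfl
  simpa [S_zero, S_one] using h

theorem Xp_one : Xp 1 = -xP ^ 2 - yP := by
  rw [Xp, xP, yP]

theorem Xp_zero : Xp 0 = -2 := by
  rw [Xp]

theorem Xp_add_two (m : ℕ) :
    Xp ((m : ℤ) + 2) = yP * Xp ((m : ℤ) + 1) - Xp m - 2 * xP ^ 2 := by
  conv_lhs => unfold Xp
  rfl

/-- The cofactor of `y + 2` in `R_m`. -/
noncomputable def RpCofactor (m : ℕ) : MvPolynomial (Fin 2) ℂ :=
  aeval yP (S ℂ (m : ℤ)) - aeval yP (S ℂ ((m : ℤ) - 1))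
    + xP ^ 2 * ∑ i ∈ Finset.range m, aeval yP (S ℂ (i : ℤ))

theorem Rp_eq_mul_RpCofactor (m : ℕ) : Rp m = (yP + 2) * RpCofactor m := rfl

theorem RpCofactor_zero : RpCofactor 0 = 1 := by
  simp [RpCofactor, S_zero, S_neg_one]

theorem RpCofactor_one : RpCofactor 1 = yP - 1 + xP ^ 2 := by
  simp [RpCofactor, S_zero, S_one]

theorem aeval_S_add_two (n : ℕ) :
    aeval yP (S ℂ ((n : ℤ) + 2)) = yP * aeval yP (S ℂ ((n : ℤ) + 1)) - aeval yP (S ℂ (n : ℤ)) := by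
  simp [S_add_two]

theorem sum_aeval_S_add_two (n : ℕ) :
    ∑ i ∈ Finset.range (n + 2), aeval yP (S ℂ (i : ℤ)) =
      yP * ∑ i ∈ Finset.range (n + 1), aeval yP (S ℂ (i : ℤ))
        - ∑ i ∈ Finset.range n, aeval yP (S ℂ (i : ℤ)) + 1 := by
  induction n with
  | zero => simp [Finset.sum_range_succ, S_zero, S_one, add_comm]
  | succ n ih =>
    have hsucc := Finset.sum_range_succ fun i : ℕ => aeval yP (S ℂ (i : ℤ))
    have h₀ := hsucc n
    have h₁ := hsucc (n + 1)
    have h₂ := hsucc (n + 2)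
    push_cast at h₁ h₂
    linear_combination ih + h₂ - yP * h₁ + h₀ + aeval_S_add_two n

theorem RpCofactor_add_two (m : ℕ) :
    RpCofactor (m + 2) = yP * RpCofactor (m + 1) - RpCofactor m + xP ^ 2 := by
  have h : aeval yP (S ℂ ((m : ℤ) + 1)) =
      yP * aeval yP (S ℂ (m : ℤ)) - aeval yP (S ℂ ((m : ℤ) - 1)) := by
    cases m with
    | zero => simp [S_zero, S_one, S_neg_one]
    | succ n =>
      have := aeval_S_add_two n
      push_cast
      rwa [add_sub_cancel_right, add_assoc, one_add_one_eq_two]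
  simp only [RpCofactor, sum_aeval_S_add_two]
  push_cast
  rw [show (m : ℤ) + 2 - 1 = m + 1 by ring, add_sub_cancel_right, aeval_S_add_two]
  linear_combination -h

theorem Xp_succ_eq_neg_RpCofactor_add (m : ℕ) :
    Xp ((m : ℤ) + 1) = -(RpCofactor (m + 1) + RpCofactor m) := by
  induction m using Nat.twoStepInduction with
  | zero =>
    simp only [Nat.cast_zero, zero_add, Xp_one, RpCofactor_one, RpCofactor_zero]
    ring
  | one =>
    have h := Xp_add_two 0
    simp only [Nat.cast_zero, zero_add, Xp_one, Xp_zero] at h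
    rw [Nat.cast_one, one_add_one_eq_two, h, RpCofactor_add_two 0, zero_add, RpCofactor_one,
      RpCofactor_zero]
    ring
  | more n ih₁ ih₂ =>
    have h := Xp_add_two (n + 1)
    push_cast at h ih₂ ⊢
    rw [show (n : ℤ) + 2 + 1 = n + 1 + 2 by ring, h, ih₁, ih₂, RpCofactor_add_two (n + 1),
      RpCofactor_add_two n]
    ring

/-- The quadratic invariant of the recurrence satisfied by `RpCofactor`. -/
theorem RpCofactor_invariant (m : ℕ) :
    RpCofactor (m + 1) ^ 2 + RpCofactor m ^ 2 - yP * RpCofactor (m + 1) * RpCofactor m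
      - xP ^ 2 * (RpCofactor (m + 1) + RpCofactor m) = 2 - yP - 2 * xP ^ 2 := by
  induction m with
  | zero =>
    rw [zero_add, RpCofactor_one, RpCofactor_zero]
    ring
  | succ n ih =>
    rw [RpCofactor_add_two]
    linear_combination ih

/-- `R_m * R_{m-1} = (y+2) * (X_m^2 + x^2 X_m + y + 2x^2 - 2)` for every integer `m ≥ 1`. -/
theorem Rp_mul_Rp (m : ℕ) (hm : 1 ≤ m) :
    Rp m * Rp (m - 1) =
      (yP + 2) * (Xp (m : ℤ) ^ 2 + xP ^ 2 * Xp (m : ℤ) + yP + 2 * xP ^ 2 - 2) := by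
  obtain ⟨n, rfl⟩ := Nat.exists_eq_add_of_le' hm
  rw [Nat.add_sub_cancel, Nat.cast_add_one, Xp_succ_eq_neg_RpCofactor_add, Rp_eq_mul_RpCofactor,
    Rp_eq_mul_RpCofactor]
  linear_combination -(yP + 2) * RpCofactor_invariant n
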